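/- arXiv:1709.05025 — 2 statements merged into one kernel-verified Lean document; each statement's English description precedes it below -/
import Mathlib

section
/- The subgroup ⟨σ, φ⟩ of GL(3,ℂ) equals ⟨K, λ₁₂, ε⟩ where K = ⟨σ, ρ⟩, ε = (σφ⁴)³ = diag(ζ₅, ζ₅, ζ₅), and it is the internal direct product of the four subgroups S(2,1), ⟨diag(1,1,i)⟩, ⟨diag(1,1,ω)⟩ and ⟨diag(ζ₅, ζ₅, ζ₅)⟩; in particular it is isomorphic to SL(2,5) × ℤ/4 × ℤ/3 × ℤ/5. -/
noncomputable section
open Matrix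

def zeta5 : ℂ := Complex.exp (2 * Real.pi * Complex.I / 5)

def sqrt5 : ℂ := zeta5 - zeta5 ^ 2 - zeta5 ^ 3 + zeta5 ^ 4

def alpha : Matrix (Fin 2) (Fin 2) ℂ := -(Matrix.of ![![zeta5 ^ 3, 0], ![0, zeta5 ^ 2]])
def beta : Matrix (Fin 2) (Fin 2) ℂ := Matrix.of ![![0, 1], ![-1, 0]]
def gamma : Matrix (Fin 2) (Fin 2) ℂ :=
  (zeta5 ^ 2 - zeta5 ^ 3)⁻¹ •
    Matrix.of ![![zeta5 + zeta5⁻¹, 1], ![1, -(zeta5 + zeta5⁻¹)]]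

/-- The block-diagonal embedding of a `2 × 2` matrix into `GL(3)`, with last diagonal entry 1. -/
def emb (A : Matrix (Fin 2) (Fin 2) ℂ) : Matrix (Fin 3) (Fin 3) ℂ :=
  Matrix.of ![![A 0 0, A 0 1, 0], ![A 1 0, A 1 1, 0], ![0, 0, 1]]

def alpha' : Matrix (Fin 3) (Fin 3) ℂ := emb alpha
def beta' : Matrix (Fin 3) (Fin 3) ℂ := emb beta
def gamma' : Matrix (Fin 3) (Fin 3) ℂ := emb gamma

def sigma : Matrix (Fin 3) (Fin 3) ℂ :=
  Matrix.of ![![(zeta5 - zeta5 ^ 4) / sqrt5, (zeta5 ^ 3 - zeta5 ^ 2) / sqrt5, 0],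
    ![(zeta5 ^ 3 - zeta5 ^ 2) / sqrt5, -((zeta5 - zeta5 ^ 4) / sqrt5), 0],
    ![0, 0, 1]]

def tau : Matrix (Fin 3) (Fin 3) ℂ := Matrix.diagonal ![zeta5, 1, 1]

def rho : Matrix (Fin 3) (Fin 3) ℂ := Matrix.diagonal ![zeta5 ^ 3, zeta5 ^ 2, 1]

/-- The subgroup of `GL(3, ℂ)` generated by the invertible matrices in `S`. -/
def gen3 (S : Set (Matrix (Fin 3) (Fin 3) ℂ)) : Subgroup (GL (Fin 3) ℂ) :=
  Subgroup.closure {g : GL (Fin 3) ℂ | (g : Matrix (Fin 3) (Fin 3) ℂ) ∈ S}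

/-- `S(2,1) = ⟨α', β', γ'⟩`. -/
def S21 : Subgroup (GL (Fin 3) ℂ) := gen3 {alpha', beta', gamma'}

abbrev SL25 := Matrix.SpecialLinearGroup (Fin 2) (ZMod 5)

def xi : ℂ := Complex.exp (2 * Real.pi * Complex.I / 60)

def omega : ℂ := Complex.exp (2 * Real.pi * Complex.I / 3)

/-- `φ = diag(ζ₅, 1, ξ)` with `ξ¹² = ζ₅`. -/
def phi : Matrix (Fin 3) (Fin 3) ℂ := Matrix.diagonal ![zeta5, 1, xi]

def lambda12 : Matrix (Fin 3) (Fin 3) ℂ :=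
  Matrix.diagonal ![1, 1, Complex.exp (2 * Real.pi * Complex.I / 12)]

/-- `K = ⟨σ, ρ⟩`. -/
def K : Subgroup (GL (Fin 3) ℂ) := gen3 {sigma, rho}

/-- The cyclic subgroup generated by `diag(1, 1, i)`. -/
def Ci : Subgroup (GL (Fin 3) ℂ) := gen3 {Matrix.diagonal ![1, 1, Complex.I]}

/-- The cyclic subgroup generated by `diag(1, 1, ω)`. -/
def Cw : Subgroup (GL (Fin 3) ℂ) := gen3 {Matrix.diagonal ![1, 1, omega]}

/-- The cyclic subgroup generated by `ε = diag(ζ₅, ζ₅, ζ₅)`. -/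
def E : Subgroup (GL (Fin 3) ℂ) := gen3 {Matrix.diagonal ![zeta5, zeta5, zeta5]}


section BruhatHom

theorem fact5 : Fact (Nat.Prime 5) := ⟨by norm_num⟩
attribute [local instance] fact5

/-- Discrete logarithm to base 2 modulo 5. -/
def lg5 (a : ZMod 5) : ℕ := if a = 2 then 1 else if a = 4 then 2 else if a = 3 then 3 else 0

variable {G : Type*} [Group G]

def uu (U : G) (t : ZMod 5) : G := U ^ t.val
def hh (H : G) (a : ZMod 5) : G := H ^ lg5 a

theorem pow_congr_mod {U : G} {n a b : ℕ} (hU : U ^ n = 1) (h : a % n = b % n) : U ^ a = U ^ b := by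
  rw [pow_eq_pow_mod a hU, pow_eq_pow_mod b hU, h]

theorem uu_add {U : G} (hU : U ^ 5 = 1) (s t : ZMod 5) : uu U (s + t) = uu U s * uu U t := by
  unfold uu
  rw [← pow_add]
  exact pow_congr_mod hU (by revert s t; decide)

theorem uu_zero (U : G) : uu U 0 = 1 := by simp [uu]
theorem hh_one (H : G) : hh H 1 = 1 := by
  have : lg5 1 = 0 := by decide
  simp [hh, this]

theorem hh_mul {H : G} (hH : H ^ 4 = 1) {a b : ZMod 5} (ha : a ≠ 0) (hb : b ≠ 0) :
    hh H (a * b) = hh H a * hh H b := by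
  unfold hh
  rw [← pow_add]
  exact pow_congr_mod hH (by revert a b; decide)

theorem H_upow {U H : G} (h1 : H * U = U ^ 4 * H) (n : ℕ) : H * U ^ n = U ^ (4 * n) * H := by
  induction n with
  | zero => simp
  | succ n ih => rw [pow_succ, ← mul_assoc, ih, mul_assoc, h1, ← mul_assoc, ← pow_add]; rfl

theorem Hpow_upow {U H : G} (h1 : H * U = U ^ 4 * H) (m n : ℕ) :
    H ^ m * U ^ n = U ^ (4 ^ m * n) * H ^ m := by
  induction m generalizing n with
  | zero => simp
  | succ m ih =>
    rw [pow_succ, mul_assoc, H_upow h1, ← mul_assoc, ih, mul_assoc]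
    congr 2; ring

theorem hh_uu {U H : G} (hU : U ^ 5 = 1) (h1 : H * U = U ^ 4 * H) {a : ZMod 5} (ha : a ≠ 0)
    (t : ZMod 5) : hh H a * uu U t = uu U (a ^ 2 * t) * hh H a := by
  unfold hh uu
  rw [Hpow_upow h1]
  congr 1
  exact pow_congr_mod hU (by revert a t; decide)

theorem W_hpow {W H : G} (h1 : W * H = H ^ 3 * W) (n : ℕ) : W * H ^ n = H ^ (3 * n) * W := by
  induction n with
  | zero => simp
  | succ n ih => rw [pow_succ, ← mul_assoc, ih, mul_assoc, h1, ← mul_assoc, ← pow_add]; rfl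

theorem inv5 (a : ZMod 5) : a⁻¹ = a ^ 3 := by
  by_cases h : a = 0
  · simp [h]
  · apply inv_eq_of_mul_eq_one_right
    revert a; decide

theorem W_hh {W H : G} (hH : H ^ 4 = 1) (h1 : W * H = H ^ 3 * W) {a : ZMod 5} (ha : a ≠ 0) :
    hh H a * W = W * hh H a⁻¹ := by
  unfold hh
  rw [W_hpow h1, inv5]
  congr 1
  exact pow_congr_mod hH (by revert a; decide)

/-- The Bruhat relations between the three elements. -/
structure Rels (U H W : G) : Prop where
  hU : U ^ 5 = 1
  hH : H ^ 4 = 1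
  hHU : H * U = U ^ 4 * H
  hWH : W * H = H ^ 3 * W
  hWW : W * W = H ^ 2
  h1 : W * U ^ 1 * W = U ^ 4 * W * U ^ 4
  h2 : W * U ^ 2 * W = U ^ 2 * W * H * U ^ 2
  h3 : W * U ^ 3 * W = U ^ 3 * W * H ^ 3 * U ^ 3
  h4 : W * U ^ 4 * W = U ^ 1 * W * H ^ 2 * U ^ 1

theorem WuW {U H W : G} (r : Rels U H W) {t : ZMod 5} (ht : t ≠ 0) :
    W * uu U t * W = uu U (-t⁻¹) * W * hh H t * uu U (-t⁻¹) := by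
  have key : t = 1 ∨ t = 2 ∨ t = 3 ∨ t = 4 := by revert t; decide
  rcases key with rfl | rfl | rfl | rfl
  · have e : (-(1:ZMod 5)⁻¹) = 4 := by rw [inv5]; decide
    rw [e, hh_one, mul_one]; exact r.h1
  · have e : (-(2:ZMod 5)⁻¹) = 2 := by rw [inv5]; decide
    rw [e]; have h2 := r.h2; rw [← pow_one H] at h2; exact h2
  · have e : (-(3:ZMod 5)⁻¹) = 3 := by rw [inv5]; decide
    rw [e]; exact r.h3
  · have e : (-(4:ZMod 5)⁻¹) = 1 := by rw [inv5]; decide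
    rw [e]; exact r.h4

/-- Bruhat normal form map. -/
def FF (U H W : G) (g : SL25) : G :=
  if g.1 1 0 = 0 then uu U (g.1 0 0 * g.1 0 1) * hh H (g.1 0 0)
  else uu U (g.1 0 0 / g.1 1 0) * W * hh H (g.1 1 0) * uu U (g.1 1 1 / g.1 1 0)

def slu (t : ZMod 5) : SL25 := ⟨!![1, t; 0, 1], by simp [Matrix.det_fin_two]⟩
def slh (a : ZMod 5) (ha : a ≠ 0) : SL25 := ⟨!![a, 0; 0, a⁻¹], by simp [Matrix.det_fin_two, ha]⟩
def slw : SL25 := ⟨!![0, -1; 1, 0], by simp [Matrix.det_fin_two]⟩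

theorem FF_u (U H W : G) (t : ZMod 5) : FF U H W (slu t) = uu U t := by
  simp [FF, slu, hh_one]
theorem FF_h (U H W : G) (a : ZMod 5) (ha : a ≠ 0) : FF U H W (slh a ha) = hh H a := by
  simp [FF, slh, uu_zero]
theorem FF_w (U H W : G) : FF U H W slw = W := by
  simp [FF, slw, uu_zero, hh_one]

theorem sl_entry (g k : SL25) (i j : Fin 2) :
    (g * k).1 i j = g.1 i 0 * k.1 0 j + g.1 i 1 * k.1 1 j := by
  change (g.1 * k.1) i j = _
  rw [Matrix.mul_apply, Fin.sum_univ_two]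

theorem sl_ext {g k : SL25} (h0 : g.1 0 0 = k.1 0 0) (h1 : g.1 0 1 = k.1 0 1)
    (h2 : g.1 1 0 = k.1 1 0) (h3 : g.1 1 1 = k.1 1 1) : g = k := by
  apply Subtype.ext
  rw [Matrix.eta_fin_two g.1, Matrix.eta_fin_two k.1, h0, h1, h2, h3]

theorem FF_mul_u {U H W : G} (r : Rels U H W) (g : SL25) (t : ZMod 5) :
    FF U H W (g * slu t) = FF U H W g * uu U t := by
  have e00 : (g * slu t).1 0 0 = g.1 0 0 := by rw [sl_entry]; simp [slu]
  have e01 : (g * slu t).1 0 1 = g.1 0 0 * t + g.1 0 1 := by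
    rw [sl_entry]; simp [slu]
  have e10 : (g * slu t).1 1 0 = g.1 1 0 := by rw [sl_entry]; simp [slu]
  have e11 : (g * slu t).1 1 1 = g.1 1 0 * t + g.1 1 1 := by
    rw [sl_entry]; simp [slu]
  have hd := g.2
  rw [Matrix.det_fin_two] at hd
  unfold FF
  rw [e00, e01, e10, e11]
  generalize g.1 0 0 = a at *
  generalize g.1 0 1 = b at *
  generalize g.1 1 0 = c at *
  generalize g.1 1 1 = d at *
  by_cases hc : c = 0
  · have ha : a ≠ 0 := by rintro rfl; simp [hc] at hd
    rw [if_pos hc, if_pos hc, mul_assoc (uu U _), hh_uu r.hU r.hHU ha, ← mul_assoc, ← uu_add r.hU]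
    congr 2; ring
  · rw [if_neg hc, if_neg hc, mul_assoc _ (uu U _) (uu U _), ← uu_add r.hU]
    congr 2; field_simp; ring

theorem FF_mul_h {U H W : G} (r : Rels U H W) (g : SL25) (s : ZMod 5) (hs : s ≠ 0) :
    FF U H W (g * slh s hs) = FF U H W g * hh H s := by
  have e00 : (g * slh s hs).1 0 0 = g.1 0 0 * s := by
    rw [sl_entry]; simp [slh]
  have e01 : (g * slh s hs).1 0 1 = g.1 0 1 * s⁻¹ := by
    rw [sl_entry]; simp [slh]
  have e10 : (g * slh s hs).1 1 0 = g.1 1 0 * s := by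
    rw [sl_entry]; simp [slh]
  have e11 : (g * slh s hs).1 1 1 = g.1 1 1 * s⁻¹ := by
    rw [sl_entry]; simp [slh]
  have hd := g.2
  rw [Matrix.det_fin_two] at hd
  unfold FF
  rw [e00, e01, e10, e11]
  generalize g.1 0 0 = a at *
  generalize g.1 0 1 = b at *
  generalize g.1 1 0 = c at *
  generalize g.1 1 1 = d at *
  by_cases hc : c = 0
  · have ha : a ≠ 0 := by rintro rfl; simp [hc] at hd
    rw [if_pos hc, if_pos (by simp [hc]), mul_assoc (uu U _), ← hh_mul r.hH ha hs]
    congr 2; field_simp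
  · rw [if_neg hc, if_neg (by simp [hc, hs]), hh_mul r.hH hc hs, mul_div_mul_right _ _ hs]
    simp only [mul_assoc]
    rw [hh_uu r.hU r.hHU hs]
    rw [show s ^ 2 * (d * s⁻¹ / (c * s)) = d / c by field_simp]

theorem FF_mul_w {U H W : G} (r : Rels U H W) (g : SL25) :
    FF U H W (g * slw) = FF U H W g * W := by
  have e00 : (g * slw).1 0 0 = g.1 0 1 := by
    rw [sl_entry]; simp [slw]
  have e01 : (g * slw).1 0 1 = - g.1 0 0 := by
    rw [sl_entry]; simp [slw]
  have e10 : (g * slw).1 1 0 = g.1 1 1 := by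
    rw [sl_entry]; simp [slw]
  have e11 : (g * slw).1 1 1 = - g.1 1 0 := by
    rw [sl_entry]; simp [slw]
  have hd := g.2
  rw [Matrix.det_fin_two] at hd
  unfold FF
  rw [e00, e01, e10, e11]
  generalize g.1 0 0 = a at *
  generalize g.1 0 1 = b at *
  generalize g.1 1 0 = c at *
  generalize g.1 1 1 = d at *
  by_cases hc : c = 0
  · have ha : a ≠ 0 := by rintro rfl; simp [hc] at hd
    have hd0 : d ≠ 0 := by rintro rfl; simp [hc] at hd
    have hda : d = a⁻¹ := by
      rw [hc] at hd; field_simp; linear_combination hd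
    rw [if_pos hc, if_neg hd0, mul_assoc (uu U _) (hh H a), W_hh r.hH r.hWH ha, hc, hda]
    simp [uu_zero, mul_assoc, mul_comm a b]
  · have hW2 : W * W = hh H (-1) := r.hWW
    rw [if_neg hc]
    by_cases hd0 : d = 0
    · rw [if_pos hd0, hd0]
      have hb : b = c⁻¹ * (-1) := by
        rw [hd0] at hd; field_simp; linear_combination - hd
      have hci : c⁻¹ ≠ 0 := inv_ne_zero hc
      have h3 := W_hh r.hH r.hWH hci
      rw [inv_inv] at h3
      rw [zero_div, uu_zero, mul_one, mul_assoc (uu U _) W, ← h3, mul_assoc (uu U _),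
        mul_assoc (hh H _), hW2, ← hh_mul r.hH hci (by decide), hb]
      congr 2; field_simp
    · rw [if_neg hd0]
      have hci : c⁻¹ ≠ 0 := inv_ne_zero hc
      have h3 := W_hh r.hH r.hWH hci
      rw [inv_inv] at h3
      have ht : d / c ≠ 0 := div_ne_zero hd0 hc
      have h4 := WuW r ht
      calc _ = uu U (a / c + c⁻¹ ^ 2 * (-(d / c)⁻¹)) * W * hh H (c * (d / c))
                * uu U (-(d / c)⁻¹) := by
            congr 3
            · congr 1
              field_simp
              linear_combination -hd
            · congr 1; field_simp
            · field_simp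
        _ = uu U (a / c) * (uu U (c⁻¹ ^ 2 * (-(d / c)⁻¹)) * (hh H c⁻¹ * W) * hh H (d / c))
                * uu U (-(d / c)⁻¹) := by
            rw [uu_add r.hU, hh_mul r.hH hc ht, h3]; simp only [mul_assoc]
        _ = uu U (a / c) * (hh H c⁻¹ * uu U (-(d / c)⁻¹) *  W * hh H (d / c))
                * uu U (-(d / c)⁻¹) := by
            rw [hh_uu r.hU r.hHU hci]; simp only [mul_assoc]
        _ = uu U (a / c) * hh H c⁻¹ * (W * uu U (d / c) * W) := by
            rw [h4]; simp only [mul_assoc]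
        _ = _ := by
            simp only [mul_assoc]
            rw [← mul_assoc (hh H _) W, h3]; simp only [mul_assoc]

theorem sl_decomp (g : SL25) : (∃ t a, ∃ ha : a ≠ 0, g = slu t * slh a ha) ∨
    (∃ s a t, ∃ ha : a ≠ 0, g = slu s * slw * slh a ha * slu t) := by
  have hd := g.2
  rw [Matrix.det_fin_two] at hd
  by_cases hc : g.1 1 0 = 0
  · left
    have ha : g.1 0 0 ≠ 0 := by intro h; simp [hc, h] at hd
    refine ⟨g.1 0 0 * g.1 0 1, g.1 0 0, ha, ?_⟩
    apply sl_ext <;> simp only [sl_entry] <;> simp [slu, slh]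
    · field_simp
    · exact hc
    · rw [hc] at hd; field_simp; linear_combination hd
  · right
    refine ⟨g.1 0 0 / g.1 1 0, g.1 1 0, g.1 1 1 / g.1 1 0, hc, ?_⟩
    apply sl_ext <;> simp only [sl_entry] <;> simp [slu, slh, slw]
    · field_simp
    · field_simp; linear_combination -hd
    · field_simp

theorem FF_mul {U H W : G} (r : Rels U H W) (g k : SL25) :
    FF U H W (g * k) = FF U H W g * FF U H W k := by
  rcases sl_decomp k with ⟨t, a, ha, rfl⟩ | ⟨s, a, t, ha, rfl⟩
  · simp only [← mul_assoc, FF_mul_h r, FF_mul_u r, FF_u]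
  · simp only [← mul_assoc, FF_mul_h r, FF_mul_u r, FF_mul_w r, FF_u]

def FFhom {U H W : G} (r : Rels U H W) : SL25 →* G := MonoidHom.mk' (FF U H W) (FF_mul r)

theorem FFhom_apply {U H W : G} (r : Rels U H W) (g : SL25) : FFhom r g = FF U H W g := rfl

theorem FFhom_range {U H W : G} (r : Rels U H W) :
    (FFhom r).range = Subgroup.closure {U, H, W} := by
  apply le_antisymm
  · rintro _ ⟨g, rfl⟩
    have hu : U ∈ Subgroup.closure {U, H, W} := Subgroup.subset_closure (by simp)
    have hhm : H ∈ Subgroup.closure {U, H, W} := Subgroup.subset_closure (by simp)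
    have hw : W ∈ Subgroup.closure {U, H, W} := Subgroup.subset_closure (by simp)
    change FF U H W g ∈ _
    unfold FF uu hh
    split_ifs
    · exact mul_mem (pow_mem hu _) (pow_mem hhm _)
    · exact mul_mem (mul_mem (mul_mem (pow_mem hu _) hw) (pow_mem hhm _)) (pow_mem hu _)
  · rw [Subgroup.closure_le]
    rintro x (rfl | rfl | rfl)
    · exact ⟨slu 1, (FF_u _ H W _).trans (pow_one _)⟩
    · exact ⟨slh 2 (by decide), (FF_h U _ W _ _).trans (pow_one _)⟩
    · exact ⟨slw, FF_w U H _⟩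

/-- Criterion for injectivity. -/
theorem FFhom_inj {U H W : G} (r : Rels U H W)
    (hB : ∀ m n : ℕ, m < 5 → n < 4 → U ^ m * H ^ n = 1 → m = 0 ∧ n = 0)
    (hW : ∀ m n : ℕ, W ≠ U ^ m * H ^ n) : Function.Injective (FFhom r) := by
  rw [injective_iff_map_eq_one]
  intro g hg
  rcases sl_decomp g with ⟨t, a, ha, rfl⟩ | ⟨s, a, t, ha, rfl⟩
  · rw [map_mul] at hg
    simp only [FFhom_apply] at hg
    rw [FF_u, FF_h] at hg
    have q : lg5 a < 4 := by clear hg; revert a; decide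
    obtain ⟨h1, h2⟩ := hB _ _ (ZMod.val_lt t) q hg
    clear hg
    have e1 : t = 0 := by revert t; decide
    have e2 : a = 1 := by clear q; revert a; decide
    subst e1 e2
    apply sl_ext <;> simp only [sl_entry] <;> simp [slu, slh]
  · exfalso
    rw [map_mul, map_mul, map_mul] at hg
    simp only [FFhom_apply] at hg
    rw [FF_u, FF_h, FF_w, FF_u] at hg
    have hai : a⁻¹ ≠ 0 := inv_ne_zero ha
    have e : W = uu U (-s) * uu U (-t) * hh H a⁻¹ := by
      have h1 : uu U (-s) * uu U s = 1 := by rw [← uu_add r.hU]; simp [uu_zero]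
      have h2 : uu U t * uu U (-t) = 1 := by rw [← uu_add r.hU]; simp [uu_zero]
      have h3 : hh H a * hh H a⁻¹ = 1 := by rw [← hh_mul r.hH ha hai]; simp [hh_one, ha]
      calc W = (uu U (-s) * uu U s) * W * (hh H a * (uu U t * uu U (-t)) * hh H a⁻¹) := by
            rw [h1, h2, mul_one, h3]; simp
        _ = uu U (-s) * (uu U s * W * hh H a * uu U t) * uu U (-t) * hh H a⁻¹ := by
            simp only [mul_assoc]
        _ = _ := by rw [hg, mul_one]
    rw [← uu_add r.hU] at e
    exact hW _ _ e

end BruhatHom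

section Concrete

theorem xi_prim : IsPrimitiveRoot xi 60 := by
  have := Complex.isPrimitiveRoot_exp 60 (by norm_num)
  simpa [xi] using this

theorem xi_pow60 : xi ^ 60 = 1 := xi_prim.pow_eq_one

theorem zeta5_eq : zeta5 = xi ^ 12 := by
  rw [zeta5, xi, ← Complex.exp_nat_mul]; congr 1; push_cast; ring

/-- the twelfth root of unity -/
def l12 : ℂ := Complex.exp (2 * Real.pi * Complex.I / 12)

theorem l12_eq : l12 = xi ^ 5 := by
  rw [l12, xi, ← Complex.exp_nat_mul]; congr 1; push_cast; ring

theorem omega_eq : omega = l12 ^ 4 := by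
  rw [l12, omega, ← Complex.exp_nat_mul]; congr 1; push_cast; ring

theorem I_eq : Complex.I = l12 ^ 3 := by
  rw [l12, ← Complex.exp_nat_mul]
  refine Complex.exp_pi_div_two_mul_I.symm.trans ?_
  congr 1; push_cast; ring

theorem zeta5_prim : IsPrimitiveRoot zeta5 5 := by
  have := Complex.isPrimitiveRoot_exp 5 (by norm_num)
  simpa [zeta5] using this

theorem z5 : zeta5 ^ 5 = 1 := zeta5_prim.pow_eq_one

theorem zsum : zeta5 ^ 4 + zeta5 ^ 3 + zeta5 ^ 2 + zeta5 + 1 = 0 := by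
  have := zeta5_prim.geom_sum_eq_zero (by norm_num)
  simp only [Finset.sum_range_succ, Finset.sum_range_zero] at this
  linear_combination this

theorem z_ne : zeta5 ≠ 0 := zeta5_prim.ne_zero (by norm_num)

theorem l12_pow : l12 ^ 12 = 1 := by rw [l12_eq, ← pow_mul]; exact xi_pow60
theorem l12_ne : l12 ≠ 0 := Complex.exp_ne_zero _

/-- Block matrices. -/
def blk (a b c d e : ℂ) : Matrix (Fin 3) (Fin 3) ℂ :=
  Matrix.of ![![a, b, 0], ![c, d, 0], ![0, 0, e]]

theorem blk_mul (a b c d e a2 b2 c2 d2 e2 : ℂ) : blk a b c d e * blk a2 b2 c2 d2 e2 =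
    blk (a * a2 + b * c2) (a * b2 + b * d2) (c * a2 + d * c2) (c * b2 + d * d2) (e * e2) := by
  ext i j
  fin_cases i <;> fin_cases j <;> simp [blk, Matrix.mul_apply, Fin.sum_univ_three]

theorem blk_one : (1 : Matrix (Fin 3) (Fin 3) ℂ) = blk 1 0 0 1 1 := by
  ext i j
  fin_cases i <;> fin_cases j <;> simp [blk]

theorem diag_blk (a b c : ℂ) : Matrix.diagonal ![a, b, c] = blk a 0 0 b c := by
  ext i j
  fin_cases i <;> fin_cases j <;> simp [blk]

theorem blk_dpow (a b c : ℂ) (n : ℕ) : blk a 0 0 b c ^ n = blk (a ^ n) 0 0 (b ^ n) (c ^ n) := by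
  induction n with
  | zero => simp [blk_one]
  | succ n ih => rw [pow_succ, ih, blk_mul]; simp [pow_succ]

theorem blk_congr {a b c d e a2 b2 c2 d2 e2 : ℂ} (h1 : a = a2) (h2 : b = b2) (h3 : c = c2)
    (h4 : d = d2) (h5 : e = e2) : blk a b c d e = blk a2 b2 c2 d2 e2 := by
  rw [h1, h2, h3, h4, h5]

theorem blk_det (a b c d e : ℂ) : (blk a b c d e).det = (a * d - b * c) * e := by
  simp [blk, Matrix.det_fin_three]; try ring

def sa : ℂ := (zeta5 + 2 * zeta5 ^ 2 - 2 * zeta5 ^ 3 - zeta5 ^ 4) / 5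
def sb : ℂ := (2 * zeta5 ^ 4 - zeta5 ^ 3 + zeta5 ^ 2 - 2 * zeta5) / 5

theorem sqrt5_sq : sqrt5 ^ 2 = 5 := by
  have h := zsum
  have h5 := z5
  unfold sqrt5
  grind

theorem sqrt5_ne : sqrt5 ≠ 0 := by
  intro h
  have := sqrt5_sq
  simp [h] at this

theorem sigma_eq : sigma = blk sa sb sb (-sa) 1 := by
  have h := zsum
  have h5 := z5
  have e1 : (zeta5 - zeta5 ^ 4) / sqrt5 = sa := by
    rw [div_eq_iff sqrt5_ne]; unfold sqrt5 sa; grind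
  have e2 : (zeta5 ^ 3 - zeta5 ^ 2) / sqrt5 = sb := by
    rw [div_eq_iff sqrt5_ne]; unfold sqrt5 sb; grind
  unfold sigma
  rw [e1, e2]; rfl

theorem rho_eq : rho = blk (zeta5 ^ 3) 0 0 (zeta5 ^ 2) 1 := diag_blk _ _ _

theorem beta'_eq : beta' = blk 0 1 (-1) 0 1 := by
  ext i j
  fin_cases i <;> fin_cases j <;> simp [blk, beta', beta, emb]

theorem alpha'_eq : alpha' = blk (-zeta5 ^ 3) 0 0 (-zeta5 ^ 2) 1 := by
  ext i j
  fin_cases i <;> fin_cases j <;> simp [blk, alpha', alpha, emb]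

theorem gamma'_eq : gamma' = blk sb (-sa) (-sa) (-sb) 1 := by
  have h := zsum
  have h5 := z5
  have e1 : (zeta5 ^ 2 - zeta5 ^ 3)⁻¹ = -sa := by
    apply inv_eq_of_mul_eq_one_right
    unfold sa; grind
  have e2 : zeta5⁻¹ = zeta5 ^ 4 := by
    apply inv_eq_of_mul_eq_one_right
    grind
  have e3 : -sa * (zeta5 + zeta5 ^ 4) = sb := by
    unfold sa sb; grind
  unfold gamma' gamma
  rw [e1, e2]
  ext i j
  fin_cases i <;> fin_cases j <;> simp [blk, emb]
  · linear_combination e3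
  · linear_combination e3

/-- The matrices as group elements. -/
def gS : GL (Fin 3) ℂ := GeneralLinearGroup.mkOfDetNeZero sigma (by
  have h := zsum
  have h5 := z5
  have e : (sa * -sa - sb * sb) * 1 = 1 := by unfold sa sb; grind
  rw [sigma_eq, blk_det, e]; exact one_ne_zero)
def gR : GL (Fin 3) ℂ := GeneralLinearGroup.mkOfDetNeZero rho (by
  rw [rho_eq, blk_det]; simp [z_ne])
def gB : GL (Fin 3) ℂ := GeneralLinearGroup.mkOfDetNeZero beta' (by
  rw [beta'_eq, blk_det]; simp)
def gL : GL (Fin 3) ℂ := GeneralLinearGroup.mkOfDetNeZero lambda12 (by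
  rw [lambda12, diag_blk, blk_det]; simp)
def gE : GL (Fin 3) ℂ :=
  GeneralLinearGroup.mkOfDetNeZero (Matrix.diagonal ![zeta5, zeta5, zeta5]) (by
  rw [diag_blk, blk_det]; simp [z_ne])

theorem cS : (gS : Matrix (Fin 3) (Fin 3) ℂ) = blk sa sb sb (-sa) 1 := sigma_eq
theorem cR : (gR : Matrix (Fin 3) (Fin 3) ℂ) = blk (zeta5 ^ 3) 0 0 (zeta5 ^ 2) 1 := rho_eq
theorem cB : (gB : Matrix (Fin 3) (Fin 3) ℂ) = blk 0 1 (-1) 0 1 := beta'_eq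
theorem cL : (gL : Matrix (Fin 3) (Fin 3) ℂ) = blk 1 0 0 1 l12 := diag_blk _ _ _
theorem cE : (gE : Matrix (Fin 3) (Fin 3) ℂ) = blk zeta5 0 0 zeta5 zeta5 := diag_blk _ _ _

def gA : GL (Fin 3) ℂ := gB ^ 2 * gR
def gG : GL (Fin 3) ℂ := gB * gS
def gI : GL (Fin 3) ℂ := gL ^ 3
def gW : GL (Fin 3) ℂ := gL ^ 4
def gP : GL (Fin 3) ℂ := gR * gE ^ 3 * gL ^ 5

theorem cA : (gA : Matrix (Fin 3) (Fin 3) ℂ) = alpha' := by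
  rw [gA, alpha'_eq, Units.val_mul, Units.val_pow_eq_pow_val, cB, cR, pow_two, blk_mul, blk_mul]
  apply blk_congr <;> ring
theorem cG : (gG : Matrix (Fin 3) (Fin 3) ℂ) = gamma' := by
  rw [gG, gamma'_eq, Units.val_mul, cB, cS, blk_mul]
  apply blk_congr <;> ring
theorem cI : (gI : Matrix (Fin 3) (Fin 3) ℂ) = Matrix.diagonal ![1, 1, Complex.I] := by
  rw [gI, Units.val_pow_eq_pow_val, cL, blk_dpow, diag_blk, I_eq]; simp
theorem cW : (gW : Matrix (Fin 3) (Fin 3) ℂ) = Matrix.diagonal ![1, 1, omega] := by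
  rw [gW, Units.val_pow_eq_pow_val, cL, blk_dpow, diag_blk, omega_eq]; simp
theorem cP : (gP : Matrix (Fin 3) (Fin 3) ℂ) = phi := by
  have h60 := xi_pow60
  rw [gP, Units.val_mul, Units.val_mul, Units.val_pow_eq_pow_val, Units.val_pow_eq_pow_val, cL, cR,
    cE, blk_dpow, blk_dpow, phi, diag_blk, blk_mul, blk_mul]
  have h5 := z5
  apply blk_congr
  · linear_combination zeta5 * h5
  · ring
  · ring
  · linear_combination h5
  · rw [l12_eq, zeta5_eq]; linear_combination xi * h60

theorem rels : Rels gR gB gS := by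
  have h := zsum
  have h5 := z5
  constructor <;> apply Units.ext <;>
    simp only [Units.val_mul, Units.val_pow_eq_pow_val, cR, cB, cS, blk_dpow, Units.val_one,
      blk_one]
  · apply blk_congr <;> grind
  · simp only [pow_succ, pow_zero, blk_mul, one_mul, blk_one]
    apply blk_congr <;> ring
  · simp only [pow_succ, pow_zero, blk_mul, one_mul]
    apply blk_congr <;> grind
  · simp only [pow_succ, pow_zero, blk_mul, one_mul, blk_one]
    apply blk_congr <;> ring
  · simp only [pow_succ, pow_zero, blk_mul, one_mul, blk_one]
    apply blk_congr <;> (try simp only [sa, sb]) <;> grind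
  · simp only [blk_mul]
    apply blk_congr <;> (try simp only [sa, sb]) <;> grind
  · simp only [pow_succ, pow_zero, blk_mul, one_mul, blk_one]
    apply blk_congr <;> (try simp only [sa, sb]) <;> grind
  · simp only [pow_succ, pow_zero, blk_mul, one_mul, blk_one]
    apply blk_congr <;> (try simp only [sa, sb]) <;> grind
  · simp only [pow_succ, pow_zero, blk_mul, one_mul, blk_one]
    apply blk_congr <;> (try simp only [sa, sb]) <;> grind

end Concrete

section Final

theorem gen3_one (a : GL (Fin 3) ℂ) (A : Matrix (Fin 3) (Fin 3) ℂ) (ha : ↑a = A) :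
    gen3 {A} = Subgroup.closure {a} := by
  unfold gen3; congr 1; ext g
  simp [← ha, Units.ext_iff]

theorem gen3_two (a b : GL (Fin 3) ℂ) (A B : Matrix (Fin 3) (Fin 3) ℂ) (ha : ↑a = A)
    (hb : ↑b = B) : gen3 {A, B} = Subgroup.closure {a, b} := by
  unfold gen3; congr 1; ext g
  simp [← ha, ← hb, Units.ext_iff]

theorem gen3_three (a b c : GL (Fin 3) ℂ) (A B C : Matrix (Fin 3) (Fin 3) ℂ) (ha : ↑a = A)
    (hb : ↑b = B) (hc : ↑c = C) : gen3 {A, B, C} = Subgroup.closure {a, b, c} := by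
  unfold gen3; congr 1; ext g
  simp [← ha, ← hb, ← hc, Units.ext_iff]

theorem S21_eq : S21 = Subgroup.closure {gA, gB, gG} := gen3_three _ _ _ _ _ _ cA rfl cG
theorem K_eq : K = Subgroup.closure {gS, gR} := gen3_two _ _ _ _ rfl rfl
theorem Ci_eq : Ci = Subgroup.zpowers gI := by
  rw [Subgroup.zpowers_eq_closure]; exact gen3_one _ _ cI
theorem Cw_eq : Cw = Subgroup.zpowers gW := by
  rw [Subgroup.zpowers_eq_closure]; exact gen3_one _ _ cW
theorem E_eq : E = Subgroup.zpowers gE := by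
  rw [Subgroup.zpowers_eq_closure]; exact gen3_one _ _ rfl
theorem LE_eq : gen3 {lambda12, Matrix.diagonal ![zeta5, zeta5, zeta5]} =
    Subgroup.closure {gL, gE} := gen3_two _ _ _ _ rfl rfl
theorem SP_eq : gen3 {sigma, phi} = Subgroup.closure {gS, gP} := gen3_two _ _ _ _ rfl cP

theorem S21_range : (FFhom rels).range = S21 := by
  rw [FFhom_range, S21_eq]
  apply le_antisymm
  · have hA : gA ∈ Subgroup.closure {gA, gB, gG} := Subgroup.subset_closure (by simp)
    have hB : gB ∈ Subgroup.closure {gA, gB, gG} := Subgroup.subset_closure (by simp)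
    have hG : gG ∈ Subgroup.closure {gA, gB, gG} := Subgroup.subset_closure (by simp)
    rw [Subgroup.closure_le]
    rintro x (hx | hx | hx)
    · have : gR = (gB ^ 2)⁻¹ * gA := by simp [gA]
      rw [hx, this]; exact mul_mem (inv_mem (pow_mem hB 2)) hA
    · rw [hx]; exact hB
    · rw [Set.mem_singleton_iff] at hx
      have : gS = gB⁻¹ * gG := by simp [gG]
      rw [hx, this]; exact mul_mem (inv_mem hB) hG
  · have hR : gR ∈ Subgroup.closure {gR, gB, gS} := Subgroup.subset_closure (by simp)
    have hB : gB ∈ Subgroup.closure {gR, gB, gS} := Subgroup.subset_closure (by simp)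
    have hS : gS ∈ Subgroup.closure {gR, gB, gS} := Subgroup.subset_closure (by simp)
    rw [Subgroup.closure_le]
    rintro x (hx | hx | hx)
    · rw [hx]; exact mul_mem (pow_mem hB 2) hR
    · rw [hx]; exact hB
    · rw [Set.mem_singleton_iff] at hx
      rw [hx]; exact mul_mem hB hS

theorem S21_K : S21 = K := by
  rw [← S21_range, FFhom_range, K_eq]
  have hR : gR ∈ Subgroup.closure {gS, gR} := Subgroup.subset_closure (by simp)
  have hS : gS ∈ Subgroup.closure {gS, gR} := Subgroup.subset_closure (by simp)
  have hB : gB ∈ Subgroup.closure {gS, gR} := by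
    have h2 := rels.h2
    have : gB = (gR ^ 2 * gS)⁻¹ * (gS * gR ^ 2 * gS) * (gR ^ 2)⁻¹ := by
      rw [h2]; group
    rw [this]
    exact mul_mem (mul_mem (inv_mem (mul_mem (pow_mem hR 2) hS))
      (mul_mem (mul_mem hS (pow_mem hR 2)) hS)) (inv_mem (pow_mem hR 2))
  apply le_antisymm
  · rw [Subgroup.closure_le]
    rintro x (hx | hx | hx)
    · rw [hx]; exact hR
    · rw [hx]; exact hB
    · rw [Set.mem_singleton_iff] at hx
      rw [hx]; exact hS
  · apply Subgroup.closure_mono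
    rintro x (hx | hx)
    · rw [hx]; simp
    · rw [Set.mem_singleton_iff] at hx
      rw [hx]; simp

theorem cube_eq : (sigma * phi ^ 4) ^ 3 = Matrix.diagonal ![zeta5, zeta5, zeta5] := by
  have h := zsum
  have h5 := z5
  have hx := zeta5_eq
  rw [sigma_eq, phi, diag_blk, diag_blk, blk_dpow]
  simp only [pow_succ, pow_zero, blk_mul, one_mul]
  apply blk_congr
  · simp only [sa, sb]; grind
  · simp only [sa, sb]; grind
  · simp only [sa, sb]; grind
  · simp only [sa, sb]; grind
  · rw [hx]; ring

theorem gE_eq : gE = (gS * gP ^ 4) ^ 3 := by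
  apply Units.ext
  rw [Units.val_pow_eq_pow_val, Units.val_mul, Units.val_pow_eq_pow_val, cP]
  exact cube_eq.symm

theorem gL_eq : gL = gP ^ 5 := by
  apply Units.ext
  rw [Units.val_pow_eq_pow_val, cP, cL, phi, diag_blk, blk_dpow, z5, l12_eq]
  simp

theorem gR_eq : gR = gP ^ 36 * gE ^ 2 := by
  have h60 := xi_pow60
  have h5 := z5
  apply Units.ext
  rw [Units.val_mul, Units.val_pow_eq_pow_val, Units.val_pow_eq_pow_val, cP, cR, cE, phi, diag_blk,
    blk_dpow, blk_dpow, blk_mul]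
  apply blk_congr
  · rw [zeta5_eq]; ring_nf; linear_combination (-xi ^ 36 * (xi^360 + xi ^ 300 + xi ^ 240 + xi ^ 180 + xi ^ 120 + xi ^ 60 + 1)) * h60
  · ring
  · ring
  · ring
  · rw [zeta5_eq]; linear_combination -h60

theorem gL_eq2 : gL = gW * gI⁻¹ := by
  rw [gW, gI]; group

theorem main_eq : gen3 {sigma, phi} =
    K ⊔ gen3 {lambda12, Matrix.diagonal ![zeta5, zeta5, zeta5]} := by
  rw [SP_eq, K_eq, LE_eq]
  apply le_antisymm
  · have hS : gS ∈ Subgroup.closure {gS, gR} ⊔ Subgroup.closure {gL, gE} :=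
      (le_sup_left : Subgroup.closure {gS, gR} ≤ _) (Subgroup.subset_closure (by simp))
    have hR : gR ∈ Subgroup.closure {gS, gR} ⊔ Subgroup.closure {gL, gE} :=
      (le_sup_left : Subgroup.closure {gS, gR} ≤ _) (Subgroup.subset_closure (by simp))
    have hL : gL ∈ Subgroup.closure {gS, gR} ⊔ Subgroup.closure {gL, gE} :=
      (le_sup_right : Subgroup.closure {gL, gE} ≤ _) (Subgroup.subset_closure (by simp))
    have hE : gE ∈ Subgroup.closure {gS, gR} ⊔ Subgroup.closure {gL, gE} :=
      (le_sup_right : Subgroup.closure {gL, gE} ≤ _) (Subgroup.subset_closure (by simp))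
    rw [Subgroup.closure_le]
    rintro x (hx | hx)
    · rw [hx]; exact hS
    · rw [Set.mem_singleton_iff] at hx
      rw [hx]; exact mul_mem (mul_mem hR (pow_mem hE 3)) (pow_mem hL 5)
  · have hS : gS ∈ Subgroup.closure {gS, gP} := Subgroup.subset_closure (by simp)
    have hP : gP ∈ Subgroup.closure {gS, gP} := Subgroup.subset_closure (by simp)
    have hE : gE ∈ Subgroup.closure {gS, gP} := by
      rw [gE_eq]; exact pow_mem (mul_mem hS (pow_mem hP 4)) 3
    have hL : gL ∈ Subgroup.closure {gS, gP} := by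
      rw [gL_eq]; exact pow_mem hP 5
    have hR : gR ∈ Subgroup.closure {gS, gP} := by
      rw [gR_eq]; exact mul_mem (pow_mem hP 36) (pow_mem hE 2)
    apply sup_le <;> rw [Subgroup.closure_le] <;> rintro x (hx | hx)
    · rw [hx]; exact hS
    · rw [Set.mem_singleton_iff] at hx
      rw [hx]; exact hR
    · rw [hx]; exact hL
    · rw [Set.mem_singleton_iff] at hx
      rw [hx]; exact hE

theorem prod_eq : S21 ⊔ Ci ⊔ Cw ⊔ E = gen3 {sigma, phi} := by
  rw [main_eq, S21_K, sup_assoc, sup_assoc]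
  congr 1
  rw [LE_eq, Ci_eq, Cw_eq, E_eq]
  have hL : gL ∈ Subgroup.closure {gL, gE} := Subgroup.subset_closure (by simp)
  have hE : gE ∈ Subgroup.closure {gL, gE} := Subgroup.subset_closure (by simp)
  apply le_antisymm
  · refine sup_le ?_ (sup_le ?_ ?_) <;> rw [Subgroup.zpowers_le]
    · exact pow_mem hL 3
    · exact pow_mem hL 4
    · exact hE
  · rw [Subgroup.closure_le]
    rintro x (hx | hx)
    · rw [hx, gL_eq2]
      have h1 : gW ∈ Subgroup.zpowers gI ⊔ (Subgroup.zpowers gW ⊔ Subgroup.zpowers gE) :=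
        (le_sup_of_le_right le_sup_left : Subgroup.zpowers gW ≤ _) (Subgroup.mem_zpowers gW)
      have h2 : gI ∈ Subgroup.zpowers gI ⊔ (Subgroup.zpowers gW ⊔ Subgroup.zpowers gE) :=
        (le_sup_left : Subgroup.zpowers gI ≤ _) (Subgroup.mem_zpowers gI)
      exact mul_mem h1 (inv_mem h2)
    · rw [Set.mem_singleton_iff] at hx
      rw [hx]
      exact (le_sup_of_le_right le_sup_right : Subgroup.zpowers gE ≤ _) (Subgroup.mem_zpowers gE)

theorem comm_closure {s t : Set (GL (Fin 3) ℂ)} (h : ∀ x ∈ s, ∀ y ∈ t, x * y = y * x) :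
    ∀ a ∈ Subgroup.closure s, ∀ b ∈ Subgroup.closure t, a * b = b * a := by
  have h1 : Subgroup.closure s ≤ Subgroup.centralizer t := by
    rw [Subgroup.closure_le]
    intro x hx
    rw [SetLike.mem_coe, Subgroup.mem_centralizer_iff]
    intro y hy
    exact (h x hx y hy).symm
  have h2 : Subgroup.closure t ≤ Subgroup.centralizer (Subgroup.closure s) := by
    rw [Subgroup.closure_le]
    intro y hy
    rw [SetLike.mem_coe, Subgroup.mem_centralizer_iff]
    intro x hx
    exact ((Subgroup.mem_centralizer_iff.mp (h1 hx)) y hy).symm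
  intro a ha b hb
  exact (Subgroup.mem_centralizer_iff.mp (h2 hb)) a ha

theorem comm_blk (g k : GL (Fin 3) ℂ) {a b c d e x y : ℂ} (hg : (g : Matrix _ _ ℂ) = blk a b c d e)
    (hk : (k : Matrix _ _ ℂ) = blk x 0 0 x y) : g * k = k * g := by
  apply Units.ext
  rw [Units.val_mul, Units.val_mul, hg, hk, blk_mul, blk_mul]
  apply blk_congr <;> ring

theorem cIb : (gI : Matrix (Fin 3) (Fin 3) ℂ) = blk 1 0 0 1 Complex.I := cI.trans (diag_blk _ _ _)
theorem cWb : (gW : Matrix (Fin 3) (Fin 3) ℂ) = blk 1 0 0 1 omega := cW.trans (diag_blk _ _ _)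

theorem comm_S {k : GL (Fin 3) ℂ} {x y : ℂ} (hk : (k : Matrix _ _ ℂ) = blk x 0 0 x y) :
    ∀ a ∈ S21, ∀ b ∈ Subgroup.zpowers k, a * b = b * a := by
  rw [S21_K, K_eq, Subgroup.zpowers_eq_closure]
  apply comm_closure
  rintro g hg t ht
  rw [Set.mem_singleton_iff] at ht
  subst ht
  rcases hg with hg | hg
  · subst hg; exact comm_blk _ _ cS hk
  · rw [Set.mem_singleton_iff] at hg
    subst hg; exact comm_blk _ _ cR hk

theorem comm_D {g k : GL (Fin 3) ℂ} {a b c d e x y : ℂ} (hg : (g : Matrix _ _ ℂ) = blk a b c d e)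
    (hk : (k : Matrix _ _ ℂ) = blk x 0 0 x y) :
    ∀ a ∈ Subgroup.zpowers g, ∀ b ∈ Subgroup.zpowers k, a * b = b * a := by
  rw [Subgroup.zpowers_eq_closure, Subgroup.zpowers_eq_closure]
  apply comm_closure
  rintro gg hgq t ht
  rw [Set.mem_singleton_iff] at ht hgq
  subst ht hgq
  exact comm_blk _ _ hg hk

/-- Matrices whose last row is `(0, 0, x)` with `x ^ n = 1`. -/
def Row (n : ℕ) : Subgroup (GL (Fin 3) ℂ) where
  carrier := {g | g.1 2 0 = 0 ∧ g.1 2 1 = 0 ∧ (g.1 2 2) ^ n = 1}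
  one_mem' := by simp
  mul_mem' := by
    rintro g k ⟨h0, h1, h2⟩ ⟨h3, h4, h5⟩
    simp only [Set.mem_ofPred_eq, Units.val_mul, Matrix.mul_apply, Fin.sum_univ_three]
    rw [h0, h1, h3, h4]
    simp [mul_pow, h2, h5]
  inv_mem' := by
    rintro g ⟨h0, h1, h2⟩
    have e : g.1 * (g⁻¹).1 = 1 := by rw [← Units.val_mul]; simp
    have e0 := congrFun (congrFun e 2) 0
    have e1 := congrFun (congrFun e 2) 1
    have e2 := congrFun (congrFun e 2) 2
    simp only [Matrix.mul_apply, Fin.sum_univ_three, h0, h1] at e0 e1 e2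
    simp at e0 e1 e2
    have hne : g.1 2 2 ≠ 0 := left_ne_zero_of_mul_eq_one e2
    change (g⁻¹).1 2 0 = 0 ∧ (g⁻¹).1 2 1 = 0 ∧ ((g⁻¹).1 2 2) ^ n = 1
    refine ⟨?_, ?_, ?_⟩
    · rcases e0 with h | h
      · exact absurd h hne
      · simpa using h
    · rcases e1 with h | h
      · exact absurd h hne
      · simpa using h
    · have : (g.1 2 2 * (g⁻¹).1 2 2) ^ n = 1 := by
        have ee2 : g.1 2 2 * (g⁻¹).1 2 2 = 1 := by simpa using e2
        rw [ee2, one_pow]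
      rw [mul_pow, h2, one_mul] at this
      exact this

theorem mem_Row {g : GL (Fin 3) ℂ} {n : ℕ} {a b c d e : ℂ} (hg : (g : Matrix _ _ ℂ) = blk a b c d e)
    (he : e ^ n = 1) : g ∈ Row n := by
  change g.1 2 0 = 0 ∧ g.1 2 1 = 0 ∧ (g.1 2 2) ^ n = 1
  rw [hg]
  simp [blk, he]

theorem S21_Row (n : ℕ) : S21 ≤ Row n := by
  rw [S21_K, K_eq, Subgroup.closure_le]
  rintro x (hx | hx)
  · rw [hx]; exact mem_Row cS (one_pow n)
  · rw [Set.mem_singleton_iff] at hx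
    rw [hx]; exact mem_Row cR (one_pow n)

theorem omega3 : omega ^ 3 = 1 := by rw [omega_eq, ← pow_mul, l12_pow]

theorem inf_zpowers {k : GL (Fin 3) ℂ} {x y : ℂ} {m n : ℕ} (hn : 0 < n)
    (hk : (k : Matrix _ _ ℂ) = blk x 0 0 x y) (hx : x = 1 ∨ x = y) (hy : y ^ n = 1)
    (hmn : Nat.gcd m n = 1) {T : Subgroup (GL (Fin 3) ℂ)} (hT : T ≤ Row m) :
    T ⊓ Subgroup.zpowers k = ⊥ := by
  rw [eq_bot_iff]
  rintro g ⟨hg1, hg2⟩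
  have hkn : k ^ n = 1 := by
    apply Units.ext
    rw [Units.val_pow_eq_pow_val, hk, blk_dpow, Units.val_one, blk_one]
    rcases hx with rfl | rfl <;> simp [hy]
  have hfin : IsOfFinOrder k := isOfFinOrder_iff_pow_eq_one.mpr ⟨n, hn, hkn⟩
  obtain ⟨j, rfl⟩ := hfin.mem_powers_iff_mem_zpowers.mpr hg2
  obtain ⟨-, -, h⟩ := hT hg1
  simp only [Units.val_pow_eq_pow_val, hk, blk_dpow] at h
  have hpw1 : (y ^ j) ^ m = 1 := by simpa [blk] using h
  have hpw2 : (y ^ j) ^ n = 1 := by rw [← pow_mul, mul_comm, pow_mul, hy, one_pow]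
  have e : y ^ j = 1 := by
    have := pow_gcd_eq_one.mpr ⟨hpw1, hpw2⟩
    rwa [hmn, pow_one] at this
  rw [Subgroup.mem_bot]
  apply Units.ext
  simp only [Units.val_pow_eq_pow_val, hk, blk_dpow, Units.val_one, blk_one]
  rcases hx with rfl | rfl <;> simp [e]

theorem inf1 : S21 ⊓ Ci = ⊥ := by
  rw [Ci_eq]
  exact inf_zpowers (n := 4) (m := 1) (by norm_num) cIb (Or.inl rfl) Complex.I_pow_four rfl
    (S21_Row 1)

theorem inf2 : (S21 ⊔ Ci) ⊓ Cw = ⊥ := by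
  rw [Cw_eq]
  refine inf_zpowers (n := 3) (m := 4) (by norm_num) cWb (Or.inl rfl) omega3 rfl
    (sup_le (S21_Row 4) ?_)
  rw [Ci_eq, Subgroup.zpowers_le]
  exact mem_Row cIb Complex.I_pow_four

theorem inf3 : (S21 ⊔ Ci ⊔ Cw) ⊓ E = ⊥ := by
  rw [E_eq]
  refine inf_zpowers (n := 5) (m := 12) (by norm_num) cE (Or.inr rfl) z5 rfl
    (sup_le (sup_le (S21_Row 12) ?_) ?_)
  · rw [Ci_eq, Subgroup.zpowers_le]
    refine mem_Row cIb ?_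
    rw [show 12 = 4 * 3 from rfl, pow_mul, Complex.I_pow_four, one_pow]
  · rw [Cw_eq, Subgroup.zpowers_le]
    refine mem_Row cWb ?_
    rw [show 12 = 3 * 4 from rfl, pow_mul, omega3, one_pow]

theorem orderOf_blk {k : GL (Fin 3) ℂ} {x y : ℂ} {n : ℕ}
    (hk : (k : Matrix _ _ ℂ) = blk x 0 0 x y) (hx : x = 1 ∨ x = y) (hy : IsPrimitiveRoot y n) :
    orderOf k = n := by
  rw [hy.eq_orderOf]
  apply orderOf_eq_orderOf_iff.mpr
  intro j
  constructor
  · intro h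
    have h1 := congrArg Units.val h
    rw [Units.val_pow_eq_pow_val, hk, blk_dpow, Units.val_one, blk_one] at h1
    simpa [blk] using congrFun (congrFun h1 2) 2
  · intro h
    apply Units.ext
    rw [Units.val_pow_eq_pow_val, hk, blk_dpow, Units.val_one, blk_one]
    rcases hx with rfl | rfl <;> simp [h]

theorem zmod_hom {G : Type*} [Group G] {k : G} {n : ℕ} (hn : n ≠ 0) (hk : orderOf k = n) :
    ∃ f : Multiplicative (ZMod n) →* G, Function.Injective f ∧ f.range = Subgroup.zpowers k := by
  have : NeZero n := ⟨hn⟩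
  have hc : Nat.card (Multiplicative (ZMod n)) = Nat.card (Subgroup.zpowers k) := by
    rw [Nat.card_zpowers, hk]; exact Nat.card_zmod n
  let e := mulEquivOfCyclicCardEq hc
  refine ⟨(Subgroup.zpowers k).subtype.comp e.toMonoidHom, ?_, ?_⟩
  · exact (Subgroup.subtype_injective _).comp e.injective
  · rw [MonoidHom.range_comp, MonoidHom.range_eq_top.mpr e.surjective, ← MonoidHom.range_eq_map,
      Subgroup.range_subtype]

theorem FF_injective : Function.Injective (FFhom rels) := by
  have hpow : ∀ m : ℕ, ((gR ^ m : GL (Fin 3) ℂ) : Matrix (Fin 3) (Fin 3) ℂ) =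
      blk ((zeta5 ^ 3) ^ m) 0 0 ((zeta5 ^ 2) ^ m) 1 := by
    intro m; rw [Units.val_pow_eq_pow_val, cR, blk_dpow, one_pow]
  have hsa : sa ≠ 0 := by
    intro h0
    have h := zsum
    have h5 := z5
    have : (zeta5 ^ 2 - zeta5 ^ 3) * (-sa) = 1 := by unfold sa; grind
    simp [h0] at this
  have hsb : sb ≠ 0 := by
    intro h0
    have h := zsum
    have h5 := z5
    have : sb * (zeta5 - zeta5 ^ 4) = 1 := by unfold sb; grind
    simp [h0] at this
  apply FFhom_inj
  · intro m n hm hn h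
    have h1 := congrArg Units.val h
    rw [Units.val_mul, hpow, Units.val_pow_eq_pow_val, cB, Units.val_one, blk_one] at h1
    interval_cases n
    · simp only [pow_zero, mul_one] at h1
      have h2 := congrFun (congrFun h1 0) 0
      simp [blk] at h2
      rw [← pow_mul, zeta5_prim.pow_eq_one_iff_dvd] at h2
      omega
    · simp only [pow_one, blk_mul] at h1
      have h2 := congrFun (congrFun h1 0) 0
      simp [blk] at h2
    · simp only [pow_two, blk_mul] at h1
      have h2 := congrFun (congrFun h1 0) 0
      simp [blk] at h2
      have h3 : (zeta5 ^ (3 * m)) ^ 5 = 1 := by rw [← pow_mul, mul_comm, pow_mul, z5, one_pow]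
      have h4 : zeta5 ^ (3 * m) = -1 := by
        have : zeta5 ^ (3 * m) = ((zeta5 * zeta5) * zeta5) ^ m := by rw [pow_mul]; congr 1; ring
        rw [this]
        first
          | linear_combination -h2
          | (rw [show zeta5 * zeta5 * zeta5 = zeta5 ^ 3 by ring]; linear_combination -h2)
      rw [h4] at h3
      norm_num at h3
    · simp only [pow_succ, pow_zero, one_mul, blk_mul] at h1
      have h2 := congrFun (congrFun h1 0) 0
      simp [blk] at h2
  · intro m n h
    rw [pow_eq_pow_mod n rels.hH] at h
    have hn : n % 4 < 4 := Nat.mod_lt _ (by norm_num)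
    generalize n % 4 = j at h hn
    have h1 := congrArg Units.val h
    rw [Units.val_mul, hpow, Units.val_pow_eq_pow_val, cB, cS] at h1
    interval_cases j
    · simp only [pow_zero, mul_one] at h1
      have h2 := congrFun (congrFun h1 0) 1
      simp [blk] at h2
      exact hsb h2
    · simp only [pow_one, blk_mul] at h1
      have h2 := congrFun (congrFun h1 0) 0
      simp [blk] at h2
      exact hsa h2
    · simp only [pow_two, blk_mul] at h1
      have h2 := congrFun (congrFun h1 0) 1
      simp [blk] at h2
      exact hsb h2
    · simp only [pow_succ, pow_zero, one_mul, blk_mul] at h1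
      have h2 := congrFun (congrFun h1 0) 0
      simp [blk] at h2
      exact hsa h2

theorem coprod_step {A B G : Type*} [Group A] [Group B] [Group G] (f : A →* G) (g : B →* G)
    (hf : Function.Injective f) (hg : Function.Injective g)
    (hc : ∀ a ∈ f.range, ∀ b ∈ g.range, a * b = b * a) (hd : f.range ⊓ g.range = ⊥) :
    ∃ F : A × B →* G, Function.Injective F ∧ F.range = f.range ⊔ g.range := by
  have comm : ∀ m n, Commute (f m) (g n) := fun m n => hc _ ⟨m, rfl⟩ _ ⟨n, rfl⟩
  refine ⟨f.noncommCoprod g comm, ?_, ?_⟩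
  · rw [MonoidHom.noncommCoprod_injective]
    exact ⟨hf, hg, disjoint_iff.mpr hd⟩
  · exact MonoidHom.noncommCoprod_range _ _ _

theorem comm_sup {G : Type*} [Group G] {A B C : Subgroup G}
    (h1 : ∀ a ∈ A, ∀ b ∈ C, a * b = b * a) (h2 : ∀ a ∈ B, ∀ b ∈ C, a * b = b * a) :
    ∀ a ∈ A ⊔ B, ∀ b ∈ C, a * b = b * a := by
  have : A ⊔ B ≤ Subgroup.centralizer C := by
    apply sup_le
    · intro a ha
      rw [Subgroup.mem_centralizer_iff]
      exact fun b hb => (h1 a ha b hb).symm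
    · intro a ha
      rw [Subgroup.mem_centralizer_iff]
      exact fun b hb => (h2 a ha b hb).symm
  intro a ha b hb
  exact ((Subgroup.mem_centralizer_iff.mp (this ha)) b hb).symm

theorem I_prim : IsPrimitiveRoot Complex.I 4 := by
  exact Complex.isPrimitiveRoot_I

theorem omega_prim : IsPrimitiveRoot omega 3 := by
  have := Complex.isPrimitiveRoot_exp 3 (by norm_num)
  simpa [omega] using this

theorem c12 : ∀ a ∈ S21, ∀ b ∈ Ci, a * b = b * a := by rw [Ci_eq]; exact comm_S cIb
theorem c13 : ∀ a ∈ S21, ∀ b ∈ Cw, a * b = b * a := by rw [Cw_eq]; exact comm_S cWb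
theorem c14 : ∀ a ∈ S21, ∀ b ∈ E, a * b = b * a := by rw [E_eq]; exact comm_S cE
theorem c23 : ∀ a ∈ Ci, ∀ b ∈ Cw, a * b = b * a := by rw [Ci_eq, Cw_eq]; exact comm_D cIb cWb
theorem c24 : ∀ a ∈ Ci, ∀ b ∈ E, a * b = b * a := by rw [Ci_eq, E_eq]; exact comm_D cIb cE
theorem c34 : ∀ a ∈ Cw, ∀ b ∈ E, a * b = b * a := by rw [Cw_eq, E_eq]; exact comm_D cWb cE

theorem final_iso : Nonempty (gen3 {sigma, phi} ≃*
      SL25 × Multiplicative (ZMod 4) × Multiplicative (ZMod 3) × Multiplicative (ZMod 5)) := by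
  obtain ⟨f4, i4, r4⟩ := zmod_hom (by norm_num) (orderOf_blk cIb (Or.inl rfl) I_prim)
  obtain ⟨f3, i3, r3⟩ := zmod_hom (by norm_num) (orderOf_blk cWb (Or.inl rfl) omega_prim)
  obtain ⟨f5, i5, r5⟩ := zmod_hom (by norm_num) (orderOf_blk cE (Or.inr rfl) zeta5_prim)
  rw [← Ci_eq] at r4
  rw [← Cw_eq] at r3
  rw [← E_eq] at r5
  obtain ⟨F1, j1, q1⟩ := coprod_step (FFhom rels) f4 FF_injective i4
    (by rw [S21_range, r4]; exact c12) (by rw [S21_range, r4]; exact inf1)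
  rw [S21_range, r4] at q1
  obtain ⟨F2, j2, q2⟩ := coprod_step F1 f3 j1 i3
    (by rw [q1, r3]; exact comm_sup c13 c23) (by rw [q1, r3]; exact inf2)
  rw [q1, r3] at q2
  obtain ⟨F3, j3, q3⟩ := coprod_step F2 f5 j2 i5
    (by rw [q2, r5]; exact comm_sup (comm_sup c14 c24) c34) (by rw [q2, r5]; exact inf3)
  rw [q2, r5, prod_eq] at q3
  rw [← q3]
  exact ⟨(MonoidHom.ofInjective j3).symm.trans (MulEquiv.prodAssoc.trans MulEquiv.prodAssoc)⟩

end Final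

theorem stmt17 :
    (sigma * phi ^ 4) ^ 3 = Matrix.diagonal ![zeta5, zeta5, zeta5] ∧
    gen3 {sigma, phi} = K ⊔ gen3 {lambda12, Matrix.diagonal ![zeta5, zeta5, zeta5]} ∧
    (∀ a ∈ S21, ∀ b ∈ Ci, a * b = b * a) ∧
    (∀ a ∈ S21, ∀ b ∈ Cw, a * b = b * a) ∧
    (∀ a ∈ S21, ∀ b ∈ E, a * b = b * a) ∧
    (∀ a ∈ Ci, ∀ b ∈ Cw, a * b = b * a) ∧
    (∀ a ∈ Ci, ∀ b ∈ E, a * b = b * a) ∧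
    (∀ a ∈ Cw, ∀ b ∈ E, a * b = b * a) ∧
    S21 ⊓ Ci = ⊥ ∧
    (S21 ⊔ Ci) ⊓ Cw = ⊥ ∧
    (S21 ⊔ Ci ⊔ Cw) ⊓ E = ⊥ ∧
    S21 ⊔ Ci ⊔ Cw ⊔ E = gen3 {sigma, phi} ∧
    Nonempty (gen3 {sigma, phi} ≃*
      SL25 × Multiplicative (ZMod 4) × Multiplicative (ZMod 3) × Multiplicative (ZMod 5)) := by
  exact ⟨cube_eq, main_eq, c12, c13, c14, c23, c24, c34, inf1, inf2, inf3, prod_eq, final_iso⟩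
end
end

section
/- For every integer d ≥ 5, the linear automorphism group Lin(YZ^{d−1} + X^d + Y^d) ⊆ PGL(3,ℂ) of the smooth plane curve C(d) : YZ^{d−1} + X^d + Y^d = 0 is a cyclic group of order d(d−1). -/
noncomputable section
open Matrix MvPolynomial

/-- The subgroup of nonzero scalar matrices in `GL(3, ℂ)`. -/
def scalarSub : Subgroup (GL (Fin 3) ℂ) :=
  (Units.map (algebraMap ℂ (Matrix (Fin 3) (Fin 3) ℂ)).toMonoidHom).range

instance : scalarSub.Normal := by
  constructor
  rintro n ⟨c, rfl⟩ g
  refine ⟨c, ?_⟩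
  ext
  simp only [Units.coe_map, RingHom.toMonoidHom_eq_coe, MonoidHom.coe_coe, Units.val_mul]
  rw [← Algebra.commutes (↑c : ℂ) (↑g : Matrix (Fin 3) (Fin 3) ℂ), mul_assoc,
    ← Units.val_mul, mul_inv_cancel, Units.val_one, mul_one]

/-- `PGL(3, ℂ)`: the quotient of `GL(3, ℂ)` by the nonzero scalar matrices. -/
abbrev PGL3 := GL (Fin 3) ℂ ⧸ scalarSub

/-- `g` maps the zero set of `F` in `ℂ³` onto itself. -/
def Preserves (F : MvPolynomial (Fin 3) ℂ) (g : GL (Fin 3) ℂ) : Prop :=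
  (fun v => (g : Matrix (Fin 3) (Fin 3) ℂ).mulVec v) '' {v : Fin 3 → ℂ | eval v F = 0}
    = {v : Fin 3 → ℂ | eval v F = 0}

/-- The subgroup of `GL(3, ℂ)` of matrices mapping the zero set of `F` onto itself. -/
def LinGL (F : MvPolynomial (Fin 3) ℂ) : Subgroup (GL (Fin 3) ℂ) where
  carrier := {g | Preserves F g}
  one_mem' := by
    show Preserves F 1
    unfold Preserves
    simp [Matrix.one_mulVec]
  mul_mem' := by
    intro a b ha hb
    show Preserves F (a * b)
    unfold Preserves at *
    have h : (fun v => ((a * b : GL (Fin 3) ℂ) : Matrix (Fin 3) (Fin 3) ℂ).mulVec v)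
        = (fun v => (a : Matrix (Fin 3) (Fin 3) ℂ).mulVec v) ∘
          (fun v => (b : Matrix (Fin 3) (Fin 3) ℂ).mulVec v) := by
      funext v
      simp [Matrix.mulVec_mulVec]
    rw [h, Set.image_comp, hb, ha]
  inv_mem' := by
    intro a ha
    show Preserves F a⁻¹
    unfold Preserves at *
    conv_lhs => rw [← ha, ← Set.image_comp]
    have h : ((fun v => ((a⁻¹ : GL (Fin 3) ℂ) : Matrix (Fin 3) (Fin 3) ℂ).mulVec v) ∘
        (fun v => (a : Matrix (Fin 3) (Fin 3) ℂ).mulVec v)) = id := by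
      funext v
      rw [Function.comp_apply, Matrix.mulVec_mulVec, ← Units.val_mul, inv_mul_cancel,
        Units.val_one, Matrix.one_mulVec, id_eq]
    rw [h, Set.image_id]

/-- The linear automorphism group `Lin(F) ⊆ PGL(3, ℂ)`:
classes of matrices mapping the zero set of `F` onto itself. -/
def Lin (F : MvPolynomial (Fin 3) ℂ) : Subgroup PGL3 :=
  (LinGL F).map (QuotientGroup.mk' scalarSub)

namespace Aux

def Fn (n : ℕ) (v : Fin 3 → ℂ) : ℂ := v 1 * v 2 ^ n + v 0 ^ (n+1) + v 1 ^ (n+1)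

def Gr (n : ℕ) (u w : Fin 3 → ℂ) : ℂ :=
  w 1 * u 2 ^ n + u 1 * (n * u 2 ^ (n-1) * w 2) + (n+1) * u 0 ^ n * w 0 + (n+1) * u 1 ^ n * w 1

lemma hasDeriv_Fn (n : ℕ) (u w : Fin 3 → ℂ) :
    HasDerivAt (fun t : ℂ => Fn n (u + t • w)) (Gr n u w) 0 := by
  have hl : ∀ i, HasDerivAt (fun t : ℂ => (u + t • w) i) (w i) 0 := by
    intro i
    have := ((hasDerivAt_id (0:ℂ)).mul_const (w i)).const_add (u i)
    simpa using this
  have h := (((hl 1).mul ((hl 2).pow n)).add ((hl 0).pow (n+1))).add ((hl 1).pow (n+1))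
  refine HasDerivAt.congr_deriv (h.congr_of_eventuallyEq ?_) ?_
  · exact Filter.Eventually.of_forall fun t => by simp [Fn]
  · simp [Gr]

lemma grad_eq (n : ℕ) (g : Matrix (Fin 3) (Fin 3) ℂ) (c : ℂ)
    (hF : ∀ v, Fn n (g *ᵥ v) = c * Fn n v) (v w : Fin 3 → ℂ) :
    Gr n (g *ᵥ v) (g *ᵥ w) = c * Gr n v w := by
  have h1 := hasDeriv_Fn n (g *ᵥ v) (g *ᵥ w)
  have h2 := (hasDeriv_Fn n v w).const_mul c
  have : (fun t : ℂ => Fn n (g *ᵥ v + t • g *ᵥ w)) = fun t => c * Fn n (v + t • w) := by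
    funext t
    rw [← hF, mulVec_add, mulVec_smul]
  rw [this] at h1
  exact h1.unique h2

/-- Comparison of a trinomial with a form having a root of multiplicity at least three. -/
lemma triple (m : ℕ) (A E B k l α β : ℂ) (hα : α ≠ 0)
    (h : ∀ x : ℂ, A * x ^ (m+4) + E * x + B = (k * x + l) * (α * x + β) ^ (m+3)) :
    E = 0 ∧ B = 0 ∧ (A = 0 ∨ β = 0) := by
  have hp : (Polynomial.C A * Polynomial.X ^ (m+4) + Polynomial.C E * Polynomial.X + Polynomial.C B)
      = (Polynomial.C k * Polynomial.X + Polynomial.C l) *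
        (Polynomial.C α * Polynomial.X + Polynomial.C β) ^ (m+3) := by
    apply Polynomial.funext
    intro x
    simpa using h x
  set q : Polynomial ℂ := Polynomial.C α * Polynomial.X + Polynomial.C β with hq
  set p := Polynomial.C A * Polynomial.X ^ (m+4) + Polynomial.C E * Polynomial.X + Polynomial.C B with hpp
  have d0 : q ^ 3 ∣ p := by
    rw [hp, pow_add]; exact Dvd.intro_left _ (by rw [mul_assoc])
  have d1 := Polynomial.pow_sub_one_dvd_derivative_of_pow_dvd d0
  have d2 := Polynomial.pow_sub_one_dvd_derivative_of_pow_dvd d1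
  have hx : q.eval (-β/α) = 0 := by simp [hq]; field_simp; ring
  have ev : ∀ (j : ℕ) (r : Polynomial ℂ), j ≠ 0 → q ^ j ∣ r → r.eval (-β/α) = 0 := by
    rintro j r hj ⟨s, rfl⟩
    simp [hx, hj]
  have e0 := ev _ _ (by norm_num) d0
  have e1 := ev _ _ (by norm_num) d1
  have e2 := ev _ _ (by norm_num) d2
  simp [hpp] at e0 e1 e2
  have hm1 : (m:ℂ) + 4 ≠ 0 := by norm_cast
  have hm2 : (m:ℂ) + 3 ≠ 0 := by norm_cast
  have hA : A = 0 ∨ β = 0 := by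
    rcases e2 with h | h
    · exact Or.inl h
    · right
      simp [hα] at h
      rcases h with h | h | h
      · exfalso; apply hm1; linear_combination h
      · exfalso; apply hm2; linear_combination h
      · exact h
  rcases hA with rfl | rfl
  · simp at e1
    subst e1
    simp at e0
    simp [e0]
  · simp at e1 e0
    exact ⟨e1, e0, Or.inr rfl⟩

lemma lin_cmp (m : ℕ) (A E B k l : ℂ)
    (h : ∀ x : ℂ, A * x ^ (m+4) + E * x + B = k * x + l) : A = 0 := by
  have hp : (Polynomial.C A * Polynomial.X ^ (m+4) + Polynomial.C E * Polynomial.X + Polynomial.C B) = (Polynomial.C k * Polynomial.X + Polynomial.C l) := by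
    apply Polynomial.funext
    intro x
    simpa using h x
  have := congrArg (fun p => Polynomial.coeff p (m+4)) hp
  simpa [Polynomial.coeff_X, Polynomial.coeff_C, Polynomial.coeff_X_pow] using this

lemma diag_of (m : ℕ) (g h : Matrix (Fin 3) (Fin 3) ℂ) (hgh : g * h = 1) (hhg : h * g = 1)
    (c : ℂ) (hF : ∀ v, Fn (m+4) (g *ᵥ v) = c * Fn (m+4) v) :
    ∀ i j, i ≠ j → h i j = 0 := by
  have hc : c ≠ 0 := by
    rintro rfl
    have := hF (h *ᵥ ![1,0,0])
    rw [mulVec_mulVec, hgh] at this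
    simp [Fn] at this
  have hG : ∀ u w, Gr (m+4) u (g *ᵥ w) = c * Gr (m+4) (h *ᵥ u) w := by
    intro u w
    have := grad_eq _ g c hF (h *ᵥ u) w
    rwa [mulVec_mulVec, hgh, one_mulVec] at this
  have hd : (m:ℂ) + 4 + 1 ≠ 0 := by norm_cast
  have hn : (m:ℂ) + 4 ≠ 0 := by norm_cast
  have e (i j) : h i 0 * g 0 j + h i 1 * g 1 j + h i 2 * g 2 j = if i = j then 1 else 0 := by
    have := congrFun (congrFun hhg i) j
    simpa [Matrix.mul_apply, Fin.sum_univ_three, Matrix.one_apply] using this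
  have e' (i j) : g i 0 * h 0 j + g i 1 * h 1 j + g i 2 * h 2 j = if i = j then 1 else 0 := by
    have := congrFun (congrFun hgh i) j
    simpa [Matrix.mul_apply, Fin.sum_univ_three, Matrix.one_apply] using this
  -- first direction
  have h0 (x y z : ℂ) : ((m:ℂ)+4+1) * g 0 0 * x ^ (m+4)
      + g 1 0 * (z ^ (m+4) + ((m:ℂ)+4+1) * y ^ (m+4)) + g 2 0 * ((m:ℂ)+4) * y * z ^ (m+3)
      = c * ((m:ℂ)+4+1) * (h 0 0 * x + h 0 1 * y + h 0 2 * z) ^ (m+4) := by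
    have := hG ![x,y,z] ![1,0,0]
    simp [Gr, Matrix.mulVec, dotProduct, Fin.sum_univ_three] at this
    linear_combination this
  have h2 (y : ℂ) : g 1 2 * ((m:ℂ)+4+1) * y ^ (m+4) + g 2 2 * ((m:ℂ)+4) * y + g 1 2
      = (c * ((m:ℂ)+4) * h 1 1 * y + c * ((m:ℂ)+4) * h 1 2) * (h 2 1 * y + h 2 2) ^ (m+3) := by
    have := hG ![0,y,1] ![0,0,1]
    simp [Gr, Matrix.mulVec, dotProduct, Fin.sum_univ_three] at this
    linear_combination this
  have key : h 0 1 = 0 ∧ h 0 2 = 0 ∧ g 1 0 = 0 ∧ g 2 0 = 0 := by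
    by_cases hα : h 0 0 = 0
    · exfalso
      by_cases hβ : h 0 1 = 0
      · have a1 := h0 0 1 0
        simp [hα, hβ, hd] at a1
        have a2 := h0 0 0 1
        simp [hα, hβ, hd, a1, hc] at a2
        have := e' 0 0
        have := e 0 0
        simp [hα, hβ, a2] at this
      · have t := triple m (g 1 0 * ((m:ℂ)+4+1)) (g 2 0 * ((m:ℂ)+4)) (g 1 0)
          (c * ((m:ℂ)+4+1) * h 0 1) (c * ((m:ℂ)+4+1) * h 0 2) (h 0 1) (h 0 2) hβ (by
            intro y
            have := h0 0 y 1
            simp [hα] at this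
            linear_combination this)
        have a1 := h0 0 1 0
        simp [hα, hβ, hd, t.2.1, hc] at a1
    · have a0 := h0 1 0 0
      simp at a0
      have ha : ((m:ℂ)+4+1) * g 0 0 ≠ 0 := by
        rw [a0]; simp [hc, hd, hα]
      have t := triple m (((m:ℂ)+4+1) * g 0 0) 0 (g 1 0 * ((m:ℂ)+4+1))
          (c * ((m:ℂ)+4+1) * h 0 0) (c * ((m:ℂ)+4+1) * h 0 1) (h 0 0) (h 0 1) hα (by
            intro x
            have := h0 x 1 0
            simp at this
            linear_combination this)
      have t' := triple m (((m:ℂ)+4+1) * g 0 0) 0 (g 1 0)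
          (c * ((m:ℂ)+4+1) * h 0 0) (c * ((m:ℂ)+4+1) * h 0 2) (h 0 0) (h 0 2) hα (by
            intro x
            have := h0 x 0 1
            simp at this
            linear_combination this)
      have b1 := t.2.2.resolve_left ha
      have b2 := t'.2.2.resolve_left ha
      refine ⟨b1, b2, t'.2.1, ?_⟩
      have := h0 0 1 1
      simpa [b1, b2, t'.2.1, hn] using this
  obtain ⟨h01, h02, g10, g20⟩ := key
  have g00 : g 0 0 ≠ 0 := by
    intro h
    have := e 0 0
    simp [h, g10, g20] at this
  have h10 : h 1 0 = 0 := by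
    have := e 1 0
    simpa [g10, g20, g00] using this
  have h20 : h 2 0 = 0 := by
    have := e 2 0
    simpa [g10, g20, g00] using this
  have e22 := e 2 2
  have h21 : h 2 1 = 0 := by
    by_contra hr
    have t := triple m _ _ _ _ _ _ _ hr h2
    have s0 : g 2 2 = 0 := by simpa [hn] using t.1
    simp [h20, t.2.1, s0] at e22
  have q0 : g 1 2 = 0 := by
    have := lin_cmp m (g 1 2 * ((m:ℂ)+4+1)) (g 2 2 * ((m:ℂ)+4)) (g 1 2)
      (c * ((m:ℂ)+4) * h 1 1 * h 2 2 ^ (m+3)) (c * ((m:ℂ)+4) * h 1 2 * h 2 2 ^ (m+3)) (by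
        intro y
        rw [h2 y, h21]; ring)
    simpa [hd] using this
  have s' : h 2 2 ≠ 0 := by
    intro hs
    simp [h20, h21, hs] at e22
  have h12 : h 1 2 = 0 := by
    have := h2 0
    simpa [q0, hc, hn, s'] using this
  intro i j hij
  fin_cases i <;> fin_cases j <;> simp_all

lemma root_set (n : ℕ) (a : ℂ) (ha : a ≠ 0) :
    ∃ s : Finset ℂ, s.card = n+1 ∧ ∀ x ∈ s, x ^ (n+1) = a := by
  obtain ⟨b, hb⟩ := IsAlgClosed.exists_pow_nat_eq a (Nat.succ_pos n)
  have hp := Complex.isPrimitiveRoot_exp (n+1) (Nat.succ_ne_zero n)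
  refine ⟨(Polynomial.nthRoots (n+1) a).toFinset, ?_, ?_⟩
  · rw [Multiset.toFinset_card_of_nodup (hp.nthRoots_nodup ha), hp.card_nthRoots]
    rw [if_pos ⟨b, hb⟩]
  · intro x hx
    rw [Multiset.mem_toFinset, Polynomial.mem_nthRoots (Nat.succ_pos n)] at hx
    exact hx

lemma generic (n : ℕ) (g : Matrix (Fin 3) (Fin 3) ℂ) (hg : ∀ v, Fn n v = 0 → Fn n (g *ᵥ v) = 0)
    (x y z : ℂ) (hyz : y * (z ^ n + y ^ n) ≠ 0) :
    Fn n (g *ᵥ ![x,y,z]) = Fn n (fun i => g i 0) * Fn n ![x,y,z] := by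
  let L : Fin 3 → Polynomial ℂ := fun i =>
    Polynomial.C (g i 0) * Polynomial.X + Polynomial.C (g i 1 * y + g i 2 * z)
  let P : Polynomial ℂ := L 1 * L 2 ^ n + L 0 ^ (n+1) + L 1 ^ (n+1)
  let Q : Polynomial ℂ := P - Polynomial.C (Fn n (fun i => g i 0)) *
    (Polynomial.X ^ (n+1) + Polynomial.C (y * (z ^ n + y ^ n)))
  have hP : ∀ t, P.eval t = Fn n (g *ᵥ ![t,y,z]) := by
    intro t
    simp [P, L, Fn, Matrix.mulVec, dotProduct, Fin.sum_univ_three, add_assoc]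
  have hQ : ∀ t, Q.eval t = Fn n (g *ᵥ ![t,y,z]) - Fn n (fun i => g i 0) * Fn n ![t,y,z] := by
    intro t
    simp only [Q, Polynomial.eval_sub, hP]
    simp [Fn]
    left
    ring
  have hL : ∀ i, (L i).natDegree ≤ 1 := fun i => Polynomial.natDegree_linear_le
  have hLc : ∀ i, (L i).coeff 1 = g i 0 := fun i => by simp [L, Polynomial.coeff_C]
  have hLp : ∀ i k, (L i ^ k).natDegree ≤ k := fun i k => by
    simpa using Polynomial.natDegree_pow_le_of_le k (hL i)
  have hLpc : ∀ i k, (L i ^ k).coeff k = g i 0 ^ k := fun i k => by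
    have := Polynomial.coeff_pow_of_natDegree_le (m := k) (hL i)
    simpa [hLc] using this
  have h12 : (L 1 * L 2 ^ n).natDegree ≤ n + 1 := by
    have := Polynomial.natDegree_mul_le_of_le (hL 1) (hLp 2 n)
    omega
  have h12c : (L 1 * L 2 ^ n).coeff (n+1) = g 1 0 * g 2 0 ^ n := by
    rw [add_comm n 1, Polynomial.coeff_mul_add_eq_of_natDegree_le (hL 1) (hLp 2 n), hLc, hLpc]
  have hPd : P.natDegree ≤ n + 1 :=
    Polynomial.natDegree_add_le_of_degree_le
      (Polynomial.natDegree_add_le_of_degree_le h12 (hLp _ _)) (hLp _ _)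
  have hQdeg : Q.degree < ((n+1 : ℕ) : WithBot ℕ) := by
    rw [Polynomial.degree_lt_iff_coeff_zero]
    intro k hk
    rcases hk.eq_or_lt with rfl | hk
    · simp only [Q, P, Polynomial.coeff_sub, Polynomial.coeff_C_mul, Polynomial.coeff_add,
        Polynomial.coeff_X_pow, Polynomial.coeff_C, h12c, hLpc]
      simp [Fn]
    · have : P.coeff k = 0 := Polynomial.coeff_eq_zero_of_natDegree_lt (by omega)
      simp only [Q, Polynomial.coeff_sub, this, Polynomial.coeff_C_mul, Polynomial.coeff_add,
        Polynomial.coeff_X_pow, Polynomial.coeff_C]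
      rw [if_neg (by omega), if_neg (by omega)]
      simp
  obtain ⟨s, hs, hsr⟩ := root_set n (-(y * (z ^ n + y ^ n))) (neg_ne_zero.mpr hyz)
  have hQ0 : Q = 0 := by
    apply Polynomial.eq_zero_of_degree_lt_of_eval_finset_eq_zero s
    · rw [hs]; exact hQdeg
    · intro t ht
      have h0 : Fn n ![t,y,z] = 0 := by
        have := hsr t ht
        simp [Fn]
        linear_combination this
      rw [hQ, hg _ h0, h0]; simp
  have := hQ x
  rw [hQ0] at this
  simp at this
  linear_combination -this

lemma exists_scalar (n : ℕ) (g : Matrix (Fin 3) (Fin 3) ℂ)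
    (hg : ∀ v, Fn n v = 0 → Fn n (g *ᵥ v) = 0) :
    ∃ c, ∀ v, Fn n (g *ᵥ v) = c * Fn n v := by
  refine ⟨Fn n (fun i => g i 0), ?_⟩
  set c := Fn n (fun i => g i 0) with hc
  let L : Fin 3 → MvPolynomial (Fin 3) ℂ := fun i =>
    C (g i 0) * X 0 + C (g i 1) * X 1 + C (g i 2) * X 2
  let P : MvPolynomial (Fin 3) ℂ := (L 1 * L 2 ^ n + L 0 ^ (n+1) + L 1 ^ (n+1))
    - C c * (X 1 * X 2 ^ n + X 0 ^ (n+1) + X 1 ^ (n+1))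
  let R : MvPolynomial (Fin 3) ℂ := X 1 * (X 2 ^ n + X 1 ^ n)
  have hP : ∀ v, eval v P = Fn n (g *ᵥ v) - c * Fn n v := by
    intro v
    simp [P, L, Fn, Matrix.mulVec, dotProduct, Fin.sum_univ_three]
  have hR : ∀ v, eval v R = v 1 * (v 2 ^ n + v 1 ^ n) := by
    intro v
    simp [R]
  have hPR : P * R = 0 := by
    apply MvPolynomial.funext
    intro v
    rw [map_mul, map_zero, hP, hR]
    by_cases h : v 1 * (v 2 ^ n + v 1 ^ n) = 0
    · rw [h, mul_zero]
    · have := generic n g hg (v 0) (v 1) (v 2) h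
      have hv : ![v 0, v 1, v 2] = v := by
        ext i; fin_cases i <;> rfl
      rw [hv] at this
      rw [this, sub_self, zero_mul]
  have hR0 : R ≠ 0 := by
    intro h
    have := hR ![0,1,1]
    rw [h] at this
    simp at this
    norm_num at this
  have hP0 := (mul_eq_zero.mp hPR).resolve_right hR0
  intro v
  have := hP v
  rw [hP0, map_zero] at this
  linear_combination -this

def dg (a b e : ℂˣ) : GL (Fin 3) ℂ where
  val := Matrix.diagonal ![(a:ℂ), b, e]
  inv := Matrix.diagonal ![((a⁻¹ : ℂˣ):ℂ), ((b⁻¹ : ℂˣ):ℂ), ((e⁻¹ : ℂˣ):ℂ)]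
  val_inv := by
    rw [Matrix.diagonal_mul_diagonal, ← Matrix.diagonal_one]
    congr 1; funext i; fin_cases i <;> simp
  inv_val := by
    rw [Matrix.diagonal_mul_diagonal, ← Matrix.diagonal_one]
    congr 1; funext i; fin_cases i <;> simp

lemma dg_mul (a b e a' b' e' : ℂˣ) : dg (a*a') (b*b') (e*e') = dg a b e * dg a' b' e' := by
  apply Units.ext
  simp only [dg, Units.val_mul, Matrix.diagonal_mul_diagonal]
  congr 1; funext i; fin_cases i <;> simp

def glHom (n : ℕ) : ℂˣ →* GL (Fin 3) ℂ where
  toFun t := dg (t ^ n) 1 (t ^ (n+1))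
  map_one' := by
    apply Units.ext
    simp only [dg, Units.val_one, one_pow]
    rw [← Matrix.diagonal_one]
    congr 1; funext i; fin_cases i <;> simp
  map_mul' s t := by
    rw [← dg_mul, mul_pow, mul_pow, one_mul]

def pglHom (n : ℕ) : rootsOfUnity ((n+1)*n) ℂ →* PGL3 :=
  ((QuotientGroup.mk' scalarSub).comp (glHom n)).comp (rootsOfUnity ((n+1)*n) ℂ).subtype

abbrev FP (n : ℕ) : MvPolynomial (Fin 3) ℂ := X 1 * X 2 ^ n + X 0 ^ (n+1) + X 1 ^ (n+1)

lemma eval_FP (n : ℕ) (v) : eval v (FP n) = Fn n v := by simp [FP, Fn]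

lemma pglHom_inj (n : ℕ) : Function.Injective (pglHom n) := by
  rw [injective_iff_map_eq_one]
  rintro ⟨t, ht⟩ h
  simp only [pglHom, MonoidHom.comp_apply, QuotientGroup.mk'_apply] at h
  rw [QuotientGroup.eq_one_iff] at h
  obtain ⟨c, hc⟩ := h
  have hM := congrArg Units.val hc
  have h0 := congrFun (congrFun hM 0) 0
  have h1 := congrFun (congrFun hM 1) 1
  have h2 := congrFun (congrFun hM 2) 2
  simp [glHom, dg, Matrix.algebraMap_matrix_apply] at h0 h1 h2
  apply Subtype.ext
  apply Units.ext
  simp only [Subgroup.coe_one, Units.val_one]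
  subst h1
  simp at h0 h2
  rw [pow_succ, ← h0, one_mul] at h2
  exact h2.symm

lemma pglHom_range (m : ℕ) : (pglHom (m+4)).range = Lin (FP (m+4)) := by
  ext q
  constructor
  · rintro ⟨⟨t, ht⟩, rfl⟩
    refine ⟨glHom (m+4) t, ?_, rfl⟩
    have ht' : (t:ℂ) ^ ((m+4+1)*(m+4)) = 1 := by
      rw [mem_rootsOfUnity] at ht
      rw [← Units.val_pow_eq_pow_val, ht, Units.val_one]
    have key : ∀ s : ℂˣ, (s:ℂ) ^ ((m+4+1)*(m+4)) = 1 → ∀ v,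
        Fn (m+4) ((glHom (m+4) s : Matrix (Fin 3) (Fin 3) ℂ) *ᵥ v) = Fn (m+4) v := by
      intro s hs v
      simp only [glHom, dg, Fn, MonoidHom.coe_mk, OneHom.coe_mk, Matrix.mulVec_diagonal]
      simp
      rw [mul_pow, mul_pow, ← pow_mul, ← pow_mul, mul_comm (m+4) (m+4+1), hs]
      ring
    show Preserves _ _
    unfold Preserves
    simp only [eval_FP]
    apply Set.Subset.antisymm
    · rintro _ ⟨v, hv, rfl⟩
      simpa [key t ht'] using hv
    · intro v hv
      refine ⟨((glHom (m+4) t⁻¹ : GL (Fin 3) ℂ) : Matrix (Fin 3) (Fin 3) ℂ) *ᵥ v, ?_, ?_⟩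
      · have : ((t⁻¹ : ℂˣ) : ℂ) ^ ((m+4+1)*(m+4)) = 1 := by simp [ht']
        rw [Set.mem_setOf_eq, key _ this]; exact hv
      · simp only [Matrix.mulVec_mulVec]
        rw [← Units.val_mul, ← map_mul, mul_inv_cancel, map_one, Units.val_one, one_mulVec]
  · rintro ⟨g, hg, rfl⟩
    have sc : ∀ g ∈ LinGL (FP (m+4)), ∃ c, ∀ v,
        Fn (m+4) ((g : Matrix (Fin 3) (Fin 3) ℂ) *ᵥ v) = c * Fn (m+4) v := by
      intro g hg
      apply exists_scalar
      intro v hv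
      have hg' : Preserves _ _ := hg
      unfold Preserves at hg'
      simp only [eval_FP] at hg'
      have : (g : Matrix (Fin 3) (Fin 3) ℂ) *ᵥ v ∈ {v | Fn (m+4) v = 0} := by
        rw [← hg']; exact ⟨v, hv, rfl⟩
      exact this
    obtain ⟨c', hc'⟩ := sc _ (inv_mem hg)
    obtain ⟨c, hc⟩ := sc _ hg
    have i1 : (g⁻¹).val * g.val = 1 := by rw [← Units.val_mul]; simp
    have i2 : g.val * (g⁻¹).val = 1 := by rw [← Units.val_mul]; simp
    have hd := diag_of m (g⁻¹).val g.val i1 i2 c' hc'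
    have e (i j) : g.val i 0 * (g⁻¹).val 0 j + g.val i 1 * (g⁻¹).val 1 j
        + g.val i 2 * (g⁻¹).val 2 j = if i = j then 1 else 0 := by
      have := congrFun (congrFun i2 i) j
      simpa only [Matrix.mul_apply, Fin.sum_univ_three, Matrix.one_apply] using this
    have n0 : g.val 0 0 ≠ 0 := by
      intro h
      have := e 0 0
      rw [h, hd 0 1 (by decide), hd 0 2 (by decide)] at this
      simp at this
    have n1 : g.val 1 1 ≠ 0 := by
      intro h
      have := e 1 1
      rw [h, hd 1 0 (by decide), hd 1 2 (by decide)] at this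
      simp at this
    have n2 : g.val 2 2 ≠ 0 := by
      intro h
      have := e 2 2
      rw [h, hd 2 0 (by decide), hd 2 1 (by decide)] at this
      simp at this
    have z01 := hd 0 1 (by decide)
    have z02 := hd 0 2 (by decide)
    have z10 := hd 1 0 (by decide)
    have z12 := hd 1 2 (by decide)
    have z20 := hd 2 0 (by decide)
    have z21 := hd 2 1 (by decide)
    have r0 := hc ![1,0,0]
    have r1 := hc ![0,1,0]
    have r2 := hc ![0,1,1]
    simp only [Fn, Matrix.mulVec, dotProduct, Fin.sum_univ_three, z01, z02, z10, z12, z20, z21]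
      at r0 r1 r2
    simp at r0 r1 r2
    generalize ha : g.val 0 0 = a at *
    generalize hb : g.val 1 1 = b at *
    generalize he : g.val 2 2 = f at *
    have r2' : f ^ (m+4) = b ^ (m+4) := by
      apply mul_left_cancel₀ n1
      linear_combination r2 - 2 * r1
    have r0' : a ^ (m+4+1) = b ^ (m+4+1) := by rw [r0, r1]
    -- the parameter is `f / a`
    let t : ℂˣ := Units.mk0 f n2 / Units.mk0 a n0
    have t1 : (t:ℂ) ^ (m+4) = a / b := by
      simp only [t, Units.val_div_eq_div_val, Units.val_mk0]
      rw [div_pow, r2', div_eq_div_iff (pow_ne_zero _ n0) n1]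
      linear_combination -r0'
    have t2 : (t:ℂ) ^ (m+4+1) = f / b := by
      rw [pow_succ, t1]
      simp only [t, Units.val_div_eq_div_val, Units.val_mk0]
      field_simp
    have ht : t ∈ rootsOfUnity ((m+4+1)*(m+4)) ℂ := by
      rw [mem_rootsOfUnity]
      apply Units.ext
      rw [Units.val_pow_eq_pow_val, pow_mul, t2, div_pow, r2', div_self (pow_ne_zero _ n1),
        Units.val_one]
    refine ⟨⟨t, ht⟩, ?_⟩
    simp only [pglHom, MonoidHom.comp_apply, QuotientGroup.mk'_apply]
    rw [QuotientGroup.eq]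
    refine ⟨Units.mk0 b n1, ?_⟩
    rw [eq_inv_mul_iff_mul_eq]
    apply Units.ext
    ext i j
    simp only [glHom, dg, Units.val_mul, MonoidHom.coe_mk, OneHom.coe_mk, Subgroup.subtype_apply,
      Matrix.diagonal_mul]
    fin_cases i <;> fin_cases j <;>
      simp [Matrix.algebraMap_matrix_apply, t1, t2, n1, *]

end Aux

theorem stmt19 (d : ℕ) (hd : 5 ≤ d) :
    IsCyclic (Lin (X 1 * X 2 ^ (d - 1) + X 0 ^ d + X 1 ^ d)) ∧
    Nat.card (Lin (X 1 * X 2 ^ (d - 1) + X 0 ^ d + X 1 ^ d)) = d * (d - 1) := by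
  obtain ⟨m, rfl⟩ : ∃ m, d = m + 4 + 1 := ⟨d - 5, by omega⟩
  rw [Nat.add_sub_cancel]
  have e : rootsOfUnity ((m+4+1)*(m+4)) ℂ ≃* Lin (Aux.FP (m+4)) :=
    (MonoidHom.ofInjective (Aux.pglHom_inj (m+4))).trans
      (MulEquiv.subgroupCongr (Aux.pglHom_range m))
  constructor
  · exact isCyclic_of_surjective e e.surjective
  · rw [← Nat.card_congr e.toEquiv, Complex.card_rootsOfUnity]
end
end
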